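/- There exists an absolute constant c > 0 such that for every vector field v ∈ L^∞(−1,0; L²(B(1))) whose weak spatial gradient satisfies ∇v ∈ L²(Q(1)), and every 0 < r ≤ 1, one has ( r^{−2} ∬_{Q(r)} |v|³ dy ds )^{2/3} ≤ c ( A(r) + E(r) ). -/

import Mathlib

/- Setting: suitable weak solutions of the 3D incompressible Navier–Stokes equations,
   following Caffarelli–Kohn–Nirenberg.  The velocity field is `v`, its weak spatial
   gradient is `dv`, the pressure is `p` and the force is `f`. -/

open MeasureTheory Filter Metric Set Bornology
open scoped Topology ENNReal

noncomputable section

/-- Three dimensional Euclidean space. -/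
abbrev V3 : Type := EuclideanSpace ℝ (Fin 3)

/-- The standard basis of `V3`. -/
def e3 (i : Fin 3) : V3 := EuclideanSpace.single i 1

/-- Euclidean dot product. -/
def dot3 (a b : V3) : ℝ := ∑ i, a i * b i

/-- Squared Frobenius norm of a (gradient) matrix. -/
def fnormSq (A : V3 →L[ℝ] V3) : ℝ := ∑ i, ‖A (e3 i)‖ ^ 2

/-- Frobenius norm of a (gradient) matrix. -/
def fnorm (A : V3 →L[ℝ] V3) : ℝ := Real.sqrt (fnormSq A)

/-- Frobenius inner product of two (gradient) matrices. -/
def fdot (A B : V3 →L[ℝ] V3) : ℝ := ∑ i, dot3 (A (e3 i)) (B (e3 i))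

/-- Laplacian of a scalar function on `V3`. -/
def lap3 (φ : V3 → ℝ) (x : V3) : ℝ :=
  ∑ i, fderiv ℝ (fun y => fderiv ℝ φ y (e3 i)) x (e3 i)

/-- Smooth compactly supported scalar test function on a spatial domain. -/
def IsSpaceTest (U : Set V3) (φ : V3 → ℝ) : Prop :=
  ContDiff ℝ (⊤ : ℕ∞) φ ∧ HasCompactSupport φ ∧ tsupport φ ⊆ U

/-- Smooth compactly supported scalar test function on a space-time domain. -/
def IsTimeSpaceTest (U : Set V3) (I : Set ℝ) (φ : V3 → ℝ → ℝ) : Prop :=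
  ContDiff ℝ (⊤ : ℕ∞) (fun z : V3 × ℝ => φ z.1 z.2) ∧
  HasCompactSupport (fun z : V3 × ℝ => φ z.1 z.2) ∧
  tsupport (fun z : V3 × ℝ => φ z.1 z.2) ⊆ U ×ˢ I

/-- Smooth compactly supported vector test field on a space-time domain. -/
def IsVectorTest (U : Set V3) (I : Set ℝ) (ψ : V3 → ℝ → V3) : Prop :=
  ContDiff ℝ (⊤ : ℕ∞) (fun z : V3 × ℝ => ψ z.1 z.2) ∧
  HasCompactSupport (fun z : V3 × ℝ => ψ z.1 z.2) ∧
  tsupport (fun z : V3 × ℝ => ψ z.1 z.2) ⊆ U ×ˢ I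

/-- `Ω` has a `C²` boundary: near every boundary point, `Ω` is the sublevel set of a
`C²` function with nonvanishing gradient. -/
def HasC2Boundary (Ω : Set V3) : Prop :=
  ∀ x ∈ frontier Ω, ∃ (U : Set V3) (g : V3 → ℝ), IsOpen U ∧ x ∈ U ∧
    ContDiff ℝ 2 g ∧ (∀ y ∈ U, fderiv ℝ g y ≠ 0) ∧ Ω ∩ U = {y ∈ U | g y < 0}

/-- `dv` is the weak spatial gradient of `v` on `U × I`. -/
def IsWeakSpatialGradient (U : Set V3) (I : Set ℝ) (v : V3 → ℝ → V3)
    (dv : V3 → ℝ → V3 →L[ℝ] V3) : Prop :=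
  ∀ᵐ t ∂(volume.restrict I), ∀ φ : V3 → ℝ, IsSpaceTest U φ → ∀ u : V3,
    (∫ x in U, φ x • dv x t u) = - ∫ x in U, fderiv ℝ φ x u • v x t

/-- `(v, p)` is a suitable weak solution of the Navier–Stokes system with force `f` on
`Ω × (a, b)`, where `Ω ⊆ ℝ³` is a bounded `C²` domain; `dv` denotes the weak spatial
gradient of `v`. -/
structure IsSuitableWeakSolution (Ω : Set V3) (a b : ℝ) (v : V3 → ℝ → V3)
    (dv : V3 → ℝ → V3 →L[ℝ] V3) (p : V3 → ℝ → ℝ) (f : V3 → ℝ → V3) : Prop where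
  open_dom : IsOpen Ω
  bounded_dom : IsBounded Ω
  nonempty_dom : Ω.Nonempty
  c2_boundary : HasC2Boundary Ω
  time_lt : a < b
  meas_v : AEMeasurable (fun z : V3 × ℝ => v z.1 z.2) (volume.restrict (Ω ×ˢ Ioo a b))
  meas_dv : AEMeasurable (fun z : V3 × ℝ => dv z.1 z.2) (volume.restrict (Ω ×ˢ Ioo a b))
  meas_p : AEMeasurable (fun z : V3 × ℝ => p z.1 z.2) (volume.restrict (Ω ×ˢ Ioo a b))
  meas_f : AEMeasurable (fun z : V3 × ℝ => f z.1 z.2) (volume.restrict (Ω ×ˢ Ioo a b))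
  /-- `v ∈ L^∞(a,b; L²(Ω))`. -/
  v_linf_l2 : ∃ K : ℝ, ∀ᵐ t ∂(volume.restrict (Ioo a b)),
    IntegrableOn (fun x => ‖v x t‖ ^ 2) Ω volume ∧ (∫ x in Ω, ‖v x t‖ ^ 2) ≤ K
  /-- `∇v ∈ L²(Ω × (a,b))`. -/
  dv_l2 : IntegrableOn (fun z : V3 × ℝ => fnormSq (dv z.1 z.2)) (Ω ×ˢ Ioo a b) volume
  /-- `p ∈ L^{3/2}(Ω × (a,b))`. -/
  p_l32 : IntegrableOn (fun z : V3 × ℝ => |p z.1 z.2| ^ ((3:ℝ)/2)) (Ω ×ˢ Ioo a b) volume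
  /-- `f ∈ L^m(Ω × (a,b))` for some `m > 5/2`. -/
  f_lm : ∃ m : ℝ, 5/2 < m ∧
    IntegrableOn (fun z : V3 × ℝ => ‖f z.1 z.2‖ ^ m) (Ω ×ˢ Ioo a b) volume
  /-- `dv` is the weak spatial gradient of `v`. -/
  weak_gradient : IsWeakSpatialGradient Ω (Ioo a b) v dv
  /-- `v` is divergence free in the sense of distributions. -/
  div_free : ∀ᵐ t ∂(volume.restrict (Ioo a b)), ∀ φ : V3 → ℝ, IsSpaceTest Ω φ →
    (∫ x in Ω, fderiv ℝ φ x (v x t)) = 0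
  /-- The Navier–Stokes equations hold in the sense of distributions. -/
  nse : ∀ ψ : V3 → ℝ → V3, IsVectorTest Ω (Ioo a b) ψ →
    (∫ t in Ioo a b, ∫ x in Ω,
      (dot3 (v x t) (deriv (fun s => ψ x s) t)
        - fdot (dv x t) (fderiv ℝ (fun y => ψ y t) x)
        - dot3 (dv x t (v x t)) (ψ x t)
        + p x t * (∑ i, fderiv ℝ (fun y => ψ y t) x (e3 i) i)
        + dot3 (f x t) (ψ x t))) = 0
  /-- The generalized local energy inequality. -/
  energy : ∀ᵐ t ∂(volume.restrict (Ioo a b)), ∀ φ : V3 → ℝ → ℝ,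
    IsTimeSpaceTest Ω (Ioo a b) φ → (∀ x s, 0 ≤ φ x s) →
    (∫ x in Ω, ‖v x t‖ ^ 2 * φ x t)
        + 2 * ∫ s in Ioo a t, ∫ x in Ω, fnormSq (dv x s) * φ x s
      ≤ (∫ s in Ioo a t, ∫ x in Ω,
            ‖v x s‖ ^ 2 * (deriv (fun τ => φ x τ) s + lap3 (fun y => φ y s) x))
        + (∫ s in Ioo a t, ∫ x in Ω, ‖v x s‖ ^ 2 * fderiv ℝ (fun y => φ y s) x (v x s))
        + 2 * (∫ s in Ioo a t, ∫ x in Ω, p x s * fderiv ℝ (fun y => φ y s) x (v x s))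
        + 2 * (∫ s in Ioo a t, ∫ x in Ω, dot3 (f x s) (v x s) * φ x s)

/-- `E_q(z,r) = r^{-5+2q} ∬_{Q(z,r)} |∇v|^q`, centered at `z = (x₀,t₀)`. -/
def funEq (dv : V3 → ℝ → V3 →L[ℝ] V3) (q : ℝ) (z : V3 × ℝ) (r : ℝ) : ℝ :=
  r ^ (2 * q - 5) * ∫ t in Ioo (z.2 - r ^ 2) z.2, ∫ x in ball z.1 r, fnorm (dv x t) ^ q

/-- `E(z,r) = r⁻¹ ∬_{Q(z,r)} |∇v|²`, centered at `z = (x₀,t₀)`. -/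
def funE2 (dv : V3 → ℝ → V3 →L[ℝ] V3) (z : V3 × ℝ) (r : ℝ) : ℝ :=
  r⁻¹ * ∫ t in Ioo (z.2 - r ^ 2) z.2, ∫ x in ball z.1 r, fnormSq (dv x t)

/-- `z` is a regular point of `v`: `v` is essentially bounded on some parabolic
cylinder `Q(z,ρ)`. -/
def RegularPoint (v : V3 → ℝ → V3) (z : V3 × ℝ) : Prop :=
  ∃ ρ : ℝ, 0 < ρ ∧ ∃ K : ℝ,
    ∀ᵐ w : V3 × ℝ ∂(volume.restrict (ball z.1 ρ ×ˢ Ioo (z.2 - ρ ^ 2) z.2)),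
      ‖v w.1 w.2‖ ≤ K

/- Scaled functionals centered at the reference point `z = (0,0)`. -/

/-- `A(r) = r⁻¹ sup_{-r²<s<0} ∫_{B(r)} |v|²`. -/
def funA (v : V3 → ℝ → V3) (r : ℝ) : ℝ :=
  r⁻¹ * sSup ((fun s => ∫ x in ball (0 : V3) r, ‖v x s‖ ^ 2) '' Ioo (-r ^ 2) 0)

/-- `E(r) = r⁻¹ ∬_{Q(r)} |∇v|²`. -/
def funE (dv : V3 → ℝ → V3 →L[ℝ] V3) (r : ℝ) : ℝ :=
  r⁻¹ * ∫ t in Ioo (-r ^ 2) 0, ∫ x in ball (0 : V3) r, fnormSq (dv x t)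

/-- `E_q(r) = r^{-5+2q} ∬_{Q(r)} |∇v|^q`. -/
def funEqz (dv : V3 → ℝ → V3 →L[ℝ] V3) (q r : ℝ) : ℝ :=
  r ^ (2 * q - 5) * ∫ t in Ioo (-r ^ 2) 0, ∫ x in ball (0 : V3) r, fnorm (dv x t) ^ q

/-- `C(r) = r⁻² ∬_{Q(r)} |v|³`. -/
def funC (v : V3 → ℝ → V3) (r : ℝ) : ℝ :=
  r ^ (-2 : ℝ) * ∫ t in Ioo (-r ^ 2) 0, ∫ x in ball (0 : V3) r, ‖v x t‖ ^ 3

/-- `D(r) = r⁻² ∬_{Q(r)} |p - ⟨p⟩_{B(r)}|^{3/2}`. -/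
def funD (p : V3 → ℝ → ℝ) (r : ℝ) : ℝ :=
  r ^ (-2 : ℝ) * ∫ t in Ioo (-r ^ 2) 0, ∫ x in ball (0 : V3) r,
    |p x t - ⨍ y in ball (0 : V3) r, p y t| ^ ((3:ℝ)/2)

/-- `C̃(r) = r⁻² ∬_{Q(r)} |v - ⟨v⟩_{B(r)}|³`. -/
def funCt (v : V3 → ℝ → V3) (r : ℝ) : ℝ :=
  r ^ (-2 : ℝ) * ∫ t in Ioo (-r ^ 2) 0, ∫ x in ball (0 : V3) r,
    ‖v x t - ⨍ y in ball (0 : V3) r, v y t‖ ^ 3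

/-- `G(r) = r⁻¹ ∫_{-r²}^0 (∫_{B(r)} |v|⁶)^{1/3}`. -/
def funG (v : V3 → ℝ → V3) (r : ℝ) : ℝ :=
  r⁻¹ * ∫ t in Ioo (-r ^ 2) 0, (∫ x in ball (0 : V3) r, ‖v x t‖ ^ 6) ^ ((1:ℝ)/3)

/-- `P(r) = r⁻² inf_{c∈ℝ} ( ∫_{-r²}^0 (∫_{B(r)} |p - c|³)^{1/3} )²`. -/
def funP (p : V3 → ℝ → ℝ) (r : ℝ) : ℝ :=
  r ^ (-2 : ℝ) * ⨅ c : ℝ,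
    (∫ t in Ioo (-r ^ 2) 0, (∫ x in ball (0 : V3) r, |p x t - c| ^ 3) ^ ((1:ℝ)/3)) ^ 2

/-- `F(r) = ( ∫_{-r²}^0 (∫_{B(r)} |f|²)^{2/3} )^{3/2}`. -/
def funF (f : V3 → ℝ → V3) (r : ℝ) : ℝ :=
  (∫ t in Ioo (-r ^ 2) 0, (∫ x in ball (0 : V3) r, ‖f x t‖ ^ 2) ^ ((2:ℝ)/3)) ^ ((3:ℝ)/2)

/-!
Write `u x - u y` as the integral of the directional derivative along the segment from `y` to `x`
and apply the Cauchy–Schwarz inequality in the segment parameter `t` with weight `t ^ (-n / 4)`,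
which shares the singularity of the change of variables between the two factors. On a bounded
convex set of dimension `n < 4` this bounds the `L⁴` norm of `u` by its `L²` norm and that of its
gradient, with constants of the right scaling; mollification carries the bound over to weak
derivatives. Interpolating `L³` between `L²` and `L⁴` keeps the estimate linear in the Dirichlet
energy `∫ |∇u|²`, so that it can be integrated in time.
-/

open AffineMap (lineMap)
open Module (finrank)
open scoped Convolution NNReal

section CauchySchwarz

variable {α β : Type*} [MeasurableSpace α] [MeasurableSpace β] {μ : Measure α} {ν : Measure β}
  {w g h : α → ℝ≥0∞}

theorem sq_lintegral_mul_le (hw : AEMeasurable w μ) (hg : AEMeasurable g μ) :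
    (∫⁻ x, w x * g x ∂μ) ^ 2 ≤ (∫⁻ x, w x ∂μ) * ∫⁻ x, w x * g x ^ 2 ∂μ := by
  have sq_sqrt (a : ℝ≥0∞) : (a ^ (1 / 2 : ℝ)) ^ 2 = a := by
    rw [← ENNReal.rpow_natCast, ← ENNReal.rpow_mul]; norm_num
  have sqrt_mul_sqrt (a b : ℝ≥0∞) : a ^ (1 / 2 : ℝ) * (a * b ^ 2) ^ (1 / 2 : ℝ) = a * b := by
    rw [ENNReal.mul_rpow_of_nonneg _ _ (by norm_num), ← mul_assoc, ← sq, sq_sqrt,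
      ← ENNReal.rpow_natCast, ← ENNReal.rpow_mul]
    norm_num
  have holder := ENNReal.lintegral_mul_norm_pow_le (p := 1 / 2) (q := 1 / 2) hw
    (hw.mul (hg.pow_const 2)) (by norm_num) (by norm_num) (by norm_num)
  simp only [Pi.mul_apply, sqrt_mul_sqrt] at holder
  simpa only [mul_pow, sq_sqrt] using pow_le_pow_left' holder 2

theorem sq_setLIntegral_le {s : Set α} (hg : AEMeasurable g (μ.restrict s)) :
    (∫⁻ x in s, g x ∂μ) ^ 2 ≤ μ s * ∫⁻ x in s, g x ^ 2 ∂μ := by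
  simpa using sq_lintegral_mul_le (w := fun _ => 1) aemeasurable_const hg

theorem pow_four_lintegral_mul_le (hw : AEMeasurable w μ) (hh : AEMeasurable h μ) :
    (∫⁻ x, w x * h x ∂μ) ^ 4 ≤ (∫⁻ x, w x ∂μ) ^ 3 * ∫⁻ x, w x * h x ^ 4 ∂μ :=
  calc (∫⁻ x, w x * h x ∂μ) ^ 4 = ((∫⁻ x, w x * h x ∂μ) ^ 2) ^ 2 := by ring
    _ ≤ ((∫⁻ x, w x ∂μ) * ∫⁻ x, w x * h x ^ 2 ∂μ) ^ 2 := by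
      gcongr; exact sq_lintegral_mul_le hw hh
    _ = (∫⁻ x, w x ∂μ) ^ 2 * (∫⁻ x, w x * h x ^ 2 ∂μ) ^ 2 := by ring
    _ ≤ (∫⁻ x, w x ∂μ) ^ 2 * ((∫⁻ x, w x ∂μ) * ∫⁻ x, w x * (h x ^ 2) ^ 2 ∂μ) := by
      gcongr; exact sq_lintegral_mul_le hw (hh.pow_const 2)
    _ = (∫⁻ x, w x ∂μ) ^ 3 * ∫⁻ x, w x * h x ^ 4 ∂μ := by
      simp only [← pow_mul]; ring

theorem lintegral_sq_lintegral_mul_le [SFinite μ] [SFinite ν] {k : α → β → ℝ≥0∞} {q : β → ℝ≥0∞}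
    (hk : Measurable (Function.uncurry k)) (hq : AEMeasurable q ν)
    (hk_left : ∀ x, ∫⁻ y, k x y ∂ν ≤ 1) (hk_right : ∀ y, ∫⁻ x, k x y ∂μ ≤ 1) :
    ∫⁻ x, (∫⁻ y, k x y * q y ∂ν) ^ 2 ∂μ ≤ ∫⁻ y, q y ^ 2 ∂ν :=
  calc ∫⁻ x, (∫⁻ y, k x y * q y ∂ν) ^ 2 ∂μ
      ≤ ∫⁻ x, ∫⁻ y, k x y * q y ^ 2 ∂ν ∂μ := by
        gcongr with x
        refine (sq_lintegral_mul_le hk.of_uncurry_left.aemeasurable hq).trans ?_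
        exact mul_le_of_le_one_left' (hk_left x)
    _ = ∫⁻ y, (∫⁻ x, k x y ∂μ) * q y ^ 2 ∂ν := by
        rw [lintegral_lintegral_swap (hk.aemeasurable.mul (hq.pow_const 2).comp_snd)]
        exact lintegral_congr fun y => lintegral_mul_const _ hk.of_uncurry_right
    _ ≤ ∫⁻ y, q y ^ 2 ∂ν := by
        gcongr with y
        exact mul_le_of_le_one_left' (hk_right y)

theorem lintegral_pow_four_lintegral_le [SFinite μ] [SFinite ν] {f : α → β → ℝ≥0∞}
    {v : β → ℝ≥0∞} {C : ℝ≥0∞} (hf : Measurable (Function.uncurry f)) (hv : Measurable v)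
    (hC : ∀ᵐ y ∂ν, v y ≠ 0 ∧ v y ≠ ⊤ ∧ ∫⁻ x, f x y ^ 4 ∂μ ≤ v y ^ 4 * C) :
    ∫⁻ x, (∫⁻ y, f x y ∂ν) ^ 4 ∂μ ≤ (∫⁻ y, v y ∂ν) ^ 4 * C :=
  calc ∫⁻ x, (∫⁻ y, f x y ∂ν) ^ 4 ∂μ
      = ∫⁻ x, (∫⁻ y, v y * ((v y)⁻¹ * f x y) ∂ν) ^ 4 ∂μ := by
        refine lintegral_congr fun x => congrArg (· ^ 4) (lintegral_congr_ae ?_)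
        filter_upwards [hC] with y ⟨hy_zero, hy_top, _⟩
        rw [← mul_assoc, ENNReal.mul_inv_cancel hy_zero hy_top, one_mul]
    _ ≤ ∫⁻ x, (∫⁻ y, v y ∂ν) ^ 3 * ∫⁻ y, v y * ((v y)⁻¹ * f x y) ^ 4 ∂ν ∂μ := by
        gcongr with x
        exact pow_four_lintegral_mul_le hv.aemeasurable
          (hv.inv.mul hf.of_uncurry_left).aemeasurable
    _ = (∫⁻ y, v y ∂ν) ^ 3 * ∫⁻ y, v y * ((v y)⁻¹ ^ 4 * ∫⁻ x, f x y ^ 4 ∂μ) ∂ν := by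
        rw [lintegral_const_mul _ (by fun_prop), lintegral_lintegral_swap (by fun_prop)]
        simp only [mul_pow, ← mul_assoc]
        exact congrArg _ <| lintegral_congr fun y =>
          lintegral_const_mul _ (hf.of_uncurry_right.pow_const 4)
    _ ≤ (∫⁻ y, v y ∂ν) ^ 3 * ∫⁻ y, v y * C ∂ν := by
        gcongr 1
        refine lintegral_mono_ae ?_
        filter_upwards [hC] with y ⟨hy_zero, hy_top, hy⟩
        gcongr
        calc (v y)⁻¹ ^ 4 * ∫⁻ x, f x y ^ 4 ∂μ ≤ (v y)⁻¹ ^ 4 * (v y ^ 4 * C) := by gcongr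
          _ = C := by rw [← mul_assoc, ← mul_pow, ENNReal.inv_mul_cancel hy_zero hy_top,
              one_pow, one_mul]
    _ = (∫⁻ y, v y ∂ν) ^ 4 * C := by
        rw [lintegral_mul_const _ hv]; ring

end CauchySchwarz

theorem add_pow_four_le (a b : ℝ≥0∞) : (a + b) ^ 4 ≤ 8 * (a ^ 4 + b ^ 4) := by
  have h := ENNReal.rpow_add_le_mul_rpow_add_rpow a b (p := (4 : ℕ)) (by norm_num)
  norm_num [← mul_add] at h
  exact_mod_cast h

section Segments

variable {E F : Type*} [NormedAddCommGroup E] [NormedSpace ℝ E] [NormedAddCommGroup F]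
  [NormedSpace ℝ F] {u : E → F} {s : Set E} {x y : E} {t : ℝ}

theorem enorm_sub_le_ediam_mul_lintegral_fderiv (hu : ContDiff ℝ 1 u) (hx : x ∈ s) (hy : y ∈ s) :
    ‖u y - u x‖ₑ ≤ ediam s * ∫⁻ t in Ioo (0 : ℝ) 1, ‖fderiv ℝ u (lineMap x y t)‖ₑ := by
  have h_deriv (t : ℝ) : HasDerivAt (u ∘ lineMap x y) (fderiv ℝ u (lineMap x y t) (y - x)) t :=
    (hu.differentiable one_ne_zero _).hasFDerivAt.comp_hasDerivAt t AffineMap.hasDerivAt_lineMap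
  have h_contDiff : ContDiff ℝ 1 (u ∘ lineMap (k := ℝ) x y) :=
    hu.comp (by fun_prop)
  calc ‖u y - u x‖ₑ = ‖(u ∘ lineMap x y) (1 : ℝ) - (u ∘ lineMap x y) (0 : ℝ)‖ₑ := by simp
    _ ≤ ∫⁻ t in Icc (0 : ℝ) 1, ‖deriv (u ∘ lineMap x y) t‖ₑ :=
      enorm_sub_le_lintegral_deriv_of_contDiffOn_Icc h_contDiff.contDiffOn zero_le_one
    _ ≤ ∫⁻ t in Ioo (0 : ℝ) 1, ediam s * ‖fderiv ℝ u (lineMap x y t)‖ₑ := by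
      rw [restrict_Ioo_eq_restrict_Icc]
      gcongr with t
      rw [(h_deriv t).deriv, mul_comm]
      refine (ContinuousLinearMap.le_opENorm _ _).trans ?_
      gcongr
      rw [← edist_eq_enorm_sub]
      exact edist_le_ediam_of_mem hy hx
    _ = ediam s * ∫⁻ t in Ioo (0 : ℝ) 1, ‖fderiv ℝ u (lineMap x y t)‖ₑ :=
      lintegral_const_mul _ <| Continuous.measurable <|
        ((hu.continuous_fderiv one_ne_zero).comp (by fun_prop)).enorm

variable [MeasurableSpace E] [BorelSpace E] {μ : Measure E} {g h : E → ℝ≥0∞}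

/-- The integral over `y ∈ s` of the value of `g` at the point dividing the segment from `x` to `y`
in the ratio `t : 1 - t`. -/
def segmentIntegral (μ : Measure E) (s : Set E) (g : E → ℝ≥0∞) (x : E) (t : ℝ) : ℝ≥0∞ :=
  ∫⁻ y in s, g (lineMap x y t) ∂μ

theorem sq_segmentIntegral_le (hg : Measurable g) :
    segmentIntegral μ s g x t ^ 2 ≤ μ s * ∫⁻ y in s, g (lineMap x y t) ^ 2 ∂μ :=
  sq_setLIntegral_le (by fun_prop)

variable [FiniteDimensional ℝ E] [μ.IsAddHaarMeasure]

theorem measurable_segmentIntegral (hg : Measurable g) :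
    Measurable fun z : E × ℝ => segmentIntegral μ s g z.1 z.2 :=
  Measurable.lintegral_prod_right' (f := fun p : (E × ℝ) × E => g (lineMap p.1.1 p.2 p.1.2))
    (by fun_prop)

theorem lintegral_comp_lineMap (hh : Measurable h) (x : E) (ht : 0 < t) :
    ∫⁻ y, h (lineMap x y t) ∂μ = (ENNReal.ofReal t ^ finrank ℝ E)⁻¹ * ∫⁻ y, h y ∂μ := by
  calc ∫⁻ y, h (lineMap x y t) ∂μ = ∫⁻ y, h (t • y + x) ∂μ := by
        simp only [AffineMap.lineMap_apply, vsub_eq_sub, vadd_eq_add]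
        exact lintegral_sub_right_eq_self (fun y => h (t • y + x)) x
    _ = ∫⁻ y, h (y + x) ∂(μ.map (t • ·)) := by
        rw [lintegral_map (by fun_prop) (by fun_prop)]
    _ = (ENNReal.ofReal t ^ finrank ℝ E)⁻¹ * ∫⁻ y, h y ∂μ := by
        rw [Measure.map_addHaar_smul μ ht.ne', lintegral_smul_measure,
          lintegral_add_right_eq_self, abs_of_pos (by positivity),
          ENNReal.ofReal_inv_of_pos (by positivity), ENNReal.ofReal_pow ht.le, smul_eq_mul]

theorem setLIntegral_comp_lineMap_le (hs : MeasurableSet s) (hc : Convex ℝ s) (hh : Measurable h)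
    (hx : x ∈ s) (ht : t ∈ Ioc 0 1) :
    ∫⁻ y in s, h (lineMap x y t) ∂μ ≤
      (ENNReal.ofReal t ^ finrank ℝ E)⁻¹ * ∫⁻ y in s, h y ∂μ := by
  rw [← lintegral_indicator hs, ← lintegral_indicator hs,
    ← lintegral_comp_lineMap (hh.indicator hs) x ht.1]
  refine lintegral_mono (indicator_le fun y hy => ?_)
  rw [indicator_of_mem (hc.lineMap_mem hx hy ⟨ht.1.le, ht.2⟩)]

theorem setLIntegral_setLIntegral_comp_lineMap_le (hs : MeasurableSet s) (hc : Convex ℝ s)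
    (hh : Measurable h) (ht : t ∈ Ioo 0 1) :
    ∫⁻ x in s, ∫⁻ y in s, h (lineMap x y t) ∂μ ∂μ ≤
      2 ^ finrank ℝ E * μ s * ∫⁻ y in s, h y ∂μ := by
  have far {τ : ℝ} (hτ : τ ∈ Icc (1 / 2) 1) : ∫⁻ x in s, ∫⁻ y in s, h (lineMap x y τ) ∂μ ∂μ ≤
      2 ^ finrank ℝ E * μ s * ∫⁻ y in s, h y ∂μ := by
    have hτ_inv : (ENNReal.ofReal τ ^ finrank ℝ E)⁻¹ ≤ 2 ^ finrank ℝ E := by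
      rw [ENNReal.inv_pow, ← ENNReal.ofReal_inv_of_pos (by linarith [hτ.1])]
      gcongr
      rw [ENNReal.ofReal_le_ofNat, inv_le_comm₀ (by linarith [hτ.1]) two_pos]
      linarith [hτ.1]
    calc ∫⁻ x in s, ∫⁻ y in s, h (lineMap x y τ) ∂μ ∂μ
        ≤ ∫⁻ _ in s, 2 ^ finrank ℝ E * ∫⁻ y in s, h y ∂μ ∂μ := by
          refine setLIntegral_mono measurable_const fun x hx => ?_
          refine (setLIntegral_comp_lineMap_le hs hc hh hx ⟨by linarith [hτ.1], hτ.2⟩).trans ?_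
          gcongr
      _ = 2 ^ finrank ℝ E * μ s * ∫⁻ y in s, h y ∂μ := by rw [setLIntegral_const]; ring
  rcases le_total (1 / 2) t with h_half | h_half
  · exact far ⟨h_half, ht.2.le⟩
  · rw [lintegral_lintegral_swap (by fun_prop)]
    simpa only [AffineMap.lineMap_apply_one_sub]
      using far (τ := 1 - t) ⟨by linarith, by linarith [ht.1]⟩

theorem setLIntegral_segmentIntegral_pow_four_le (hs : MeasurableSet s) (hc : Convex ℝ s)
    (hg : Measurable g) (ht : t ∈ Ioo 0 1) :
    ∫⁻ x in s, segmentIntegral μ s g x t ^ 4 ∂μ ≤ (ENNReal.ofReal t ^ finrank ℝ E)⁻¹ *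
      (2 ^ finrank ℝ E * μ s ^ 3 * (∫⁻ y in s, g y ^ 2 ∂μ) ^ 2) := by
  set N := ∫⁻ y in s, g y ^ 2 ∂μ
  have h_meas : Measurable fun x => ∫⁻ y in s, g (lineMap x y t) ^ 2 ∂μ :=
    Measurable.lintegral_prod_right' (f := fun p : E × E => g (lineMap p.1 p.2 t) ^ 2)
      (by fun_prop)
  calc ∫⁻ x in s, segmentIntegral μ s g x t ^ 4 ∂μ
      ≤ ∫⁻ x in s, μ s ^ 2 * ((ENNReal.ofReal t ^ finrank ℝ E)⁻¹ * N) *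
          ∫⁻ y in s, g (lineMap x y t) ^ 2 ∂μ ∂μ := by
        refine setLIntegral_mono (h_meas.const_mul _) fun x hx => ?_
        calc segmentIntegral μ s g x t ^ 4 = (segmentIntegral μ s g x t ^ 2) ^ 2 := by ring
          _ ≤ (μ s * ∫⁻ y in s, g (lineMap x y t) ^ 2 ∂μ) ^ 2 := by
            gcongr; exact sq_segmentIntegral_le hg
          _ = μ s ^ 2 * (∫⁻ y in s, g (lineMap x y t) ^ 2 ∂μ) *
                ∫⁻ y in s, g (lineMap x y t) ^ 2 ∂μ := by ring
          _ ≤ _ := by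
            gcongr
            exact setLIntegral_comp_lineMap_le hs hc (hg.pow_const 2) hx ⟨ht.1, ht.2.le⟩
    _ = μ s ^ 2 * ((ENNReal.ofReal t ^ finrank ℝ E)⁻¹ * N) *
          ∫⁻ x in s, ∫⁻ y in s, g (lineMap x y t) ^ 2 ∂μ ∂μ := lintegral_const_mul _ h_meas
    _ ≤ μ s ^ 2 * ((ENNReal.ofReal t ^ finrank ℝ E)⁻¹ * N) * (2 ^ finrank ℝ E * μ s * N) := by
        gcongr
        exact setLIntegral_setLIntegral_comp_lineMap_le hs hc (hg.pow_const 2) ht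
    _ = (ENNReal.ofReal t ^ finrank ℝ E)⁻¹ * (2 ^ finrank ℝ E * μ s ^ 3 * N ^ 2) := by ring

theorem lintegral_Ioo_rpow_neg {a : ℝ} (ha : a < 1) :
    ∫⁻ t in Ioo (0 : ℝ) 1, ENNReal.ofReal t ^ (-a) = ENNReal.ofReal (1 - a)⁻¹ := by
  have h_int : IntegrableOn (fun t : ℝ => t ^ (-a)) (Ioc 0 1) :=
    (intervalIntegrable_iff_integrableOn_Ioc_of_le zero_le_one).1
      (intervalIntegral.intervalIntegrable_rpow' (by linarith))
  calc ∫⁻ t in Ioo (0 : ℝ) 1, ENNReal.ofReal t ^ (-a)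
      = ∫⁻ t in Ioc (0 : ℝ) 1, ENNReal.ofReal (t ^ (-a)) := by
        rw [restrict_Ioo_eq_restrict_Ioc]
        exact setLIntegral_congr_fun measurableSet_Ioc fun t ht =>
          ENNReal.ofReal_rpow_of_pos ht.1
    _ = ENNReal.ofReal (∫ t in (0 : ℝ)..1, t ^ (-a)) := by
        rw [intervalIntegral.integral_of_le zero_le_one, ofReal_integral_eq_lintegral_ofReal h_int]
        exact (ae_restrict_mem measurableSet_Ioc).mono fun t ht => Real.rpow_nonneg ht.1.le _
    _ = ENNReal.ofReal (1 - a)⁻¹ := by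
        rw [integral_rpow (Or.inl (by linarith)), Real.one_rpow,
          Real.zero_rpow (by linarith), sub_zero, one_div, neg_add_eq_sub]

theorem lintegral_pow_four_lintegral_Ioo_le {α : Type*} [MeasurableSpace α] {ν : Measure α}
    [SFinite ν] {f : α → ℝ → ℝ≥0∞} (hf : Measurable (Function.uncurry f)) {a : ℝ} (ha : a < 4)
    {C : ℝ≥0∞} (hC : ∀ t ∈ Ioo (0 : ℝ) 1, ∫⁻ x, f x t ^ 4 ∂ν ≤ ENNReal.ofReal t ^ (-a) * C) :
    ∫⁻ x, (∫⁻ t in Ioo (0 : ℝ) 1, f x t) ^ 4 ∂ν ≤ ENNReal.ofReal (1 - a / 4)⁻¹ ^ 4 * C := by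
  rw [← lintegral_Ioo_rpow_neg (by linarith : a / 4 < 1)]
  -- Each of the four factors receives a quarter of the singularity of `hC` at `t = 0`.
  refine lintegral_pow_four_lintegral_le hf (by fun_prop) ?_
  filter_upwards [ae_restrict_mem measurableSet_Ioo] with t ht
  have ht_pos : 0 < ENNReal.ofReal t := ENNReal.ofReal_pos.2 ht.1
  refine ⟨(ENNReal.rpow_pos ht_pos ENNReal.ofReal_ne_top).ne',
    ENNReal.rpow_ne_top_of_ne_zero ht_pos.ne' ENNReal.ofReal_ne_top,
    (hC t ht).trans_eq (congrArg (· * C) ?_)⟩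
  rw [← ENNReal.rpow_natCast, ← ENNReal.rpow_mul]
  congr 1
  push_cast
  ring

theorem setLIntegral_lintegral_segmentIntegral_pow_four_le (hn : finrank ℝ E < 4)
    (hs : MeasurableSet s) (hc : Convex ℝ s) (hg : Measurable g) :
    ∫⁻ x in s, (∫⁻ t in Ioo (0 : ℝ) 1, segmentIntegral μ s g x t) ^ 4 ∂μ ≤
      ENNReal.ofReal (1 - finrank ℝ E / 4)⁻¹ ^ 4 *
        (2 ^ finrank ℝ E * μ s ^ 3 * (∫⁻ y in s, g y ^ 2 ∂μ) ^ 2) := by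
  refine lintegral_pow_four_lintegral_Ioo_le (measurable_segmentIntegral hg)
    (by exact_mod_cast hn) fun t ht => ?_
  rw [ENNReal.rpow_neg, ENNReal.rpow_natCast]
  exact setLIntegral_segmentIntegral_pow_four_le hs hc hg ht

theorem measure_mul_enorm_le (hs : MeasurableSet s) (hu : ContDiff ℝ 1 u) (hx : x ∈ s) :
    μ s * ‖u x‖ₑ ≤ ∫⁻ y in s, ‖u y‖ₑ ∂μ +
      ediam s * ∫⁻ t in Ioo (0 : ℝ) 1, segmentIntegral μ s (‖fderiv ℝ u ·‖ₑ) x t := by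
  have h_meas : Measurable fun p : E × ℝ => ‖fderiv ℝ u (lineMap x p.1 p.2)‖ₑ :=
    ((hu.continuous_fderiv one_ne_zero).comp (by fun_prop)).enorm.measurable
  calc μ s * ‖u x‖ₑ = ∫⁻ _ in s, ‖u x‖ₑ ∂μ := by rw [setLIntegral_const, mul_comm]
    _ ≤ ∫⁻ y in s, (‖u y‖ₑ +
          ediam s * ∫⁻ t in Ioo (0 : ℝ) 1, ‖fderiv ℝ u (lineMap x y t)‖ₑ) ∂μ := by
        refine setLIntegral_mono' hs fun y hy => ?_
        calc ‖u x‖ₑ = ‖u y - (u y - u x)‖ₑ := by rw [sub_sub_cancel]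
          _ ≤ ‖u y‖ₑ + ‖u y - u x‖ₑ := enorm_sub_le
          _ ≤ _ := by gcongr; exact enorm_sub_le_ediam_mul_lintegral_fderiv hu hx hy
    _ = ∫⁻ y in s, ‖u y‖ₑ ∂μ +
          ediam s * ∫⁻ y in s, (∫⁻ t in Ioo (0 : ℝ) 1, ‖fderiv ℝ u (lineMap x y t)‖ₑ) ∂μ := by
        rw [lintegral_add_left hu.continuous.enorm.measurable,
          lintegral_const_mul _ h_meas.lintegral_prod_right']
    _ = _ := by rw [lintegral_lintegral_swap h_meas.aemeasurable]; rfl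

theorem measure_pow_four_mul_setLIntegral_pow_four_le (hs : MeasurableSet s)
    (hu : ContDiff ℝ 1 u) :
    μ s ^ 4 * ∫⁻ x in s, ‖u x‖ₑ ^ 4 ∂μ ≤ 8 * (μ s * (∫⁻ y in s, ‖u y‖ₑ ∂μ) ^ 4 +
      ediam s ^ 4 * ∫⁻ x in s,
        (∫⁻ t in Ioo (0 : ℝ) 1, segmentIntegral μ s (‖fderiv ℝ u ·‖ₑ) x t) ^ 4 ∂μ) := by
  have hu_meas : Measurable (‖u ·‖ₑ) := hu.continuous.enorm.measurable
  have h_segment_meas : Measurable fun x =>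
      ∫⁻ t in Ioo (0 : ℝ) 1, segmentIntegral μ s (‖fderiv ℝ u ·‖ₑ) x t :=
    (measurable_segmentIntegral
      (hu.continuous_fderiv one_ne_zero).enorm.measurable).lintegral_prod_right'
  calc μ s ^ 4 * ∫⁻ x in s, ‖u x‖ₑ ^ 4 ∂μ
      = ∫⁻ x in s, (μ s * ‖u x‖ₑ) ^ 4 ∂μ := by
        simp only [mul_pow]
        rw [lintegral_const_mul _ (hu_meas.pow_const 4)]
    _ ≤ ∫⁻ x in s, 8 * ((∫⁻ y in s, ‖u y‖ₑ ∂μ) ^ 4 + ediam s ^ 4 *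
          (∫⁻ t in Ioo (0 : ℝ) 1, segmentIntegral μ s (‖fderiv ℝ u ·‖ₑ) x t) ^ 4) ∂μ := by
        refine setLIntegral_mono' hs fun x hx => ?_
        rw [← mul_pow]
        exact (pow_le_pow_left' (measure_mul_enorm_le hs hu hx) 4).trans (add_pow_four_le _ _)
    _ = _ := by
        rw [lintegral_const_mul _ (by fun_prop), lintegral_add_left measurable_const,
          setLIntegral_const, lintegral_const_mul _ (h_segment_meas.pow_const 4),
          mul_comm (μ s)]

/-- The constant of the `L⁴` Sobolev inequality on convex sets of dimension `n`, meaningful for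
`n < 4`: `(1 - n / 4)⁻¹` is the integral of `t ^ (-n / 4)` over `(0, 1)`. -/
def lFourConst (n : ℕ) : ℝ≥0 := 8 * (1 + (1 - n / 4 : ℝ)⁻¹.toNNReal ^ 4 * 2 ^ n)

theorem measure_mul_setLIntegral_pow_four_le (hn : finrank ℝ E < 4) (hs : MeasurableSet s)
    (hc : Convex ℝ s) (hμs : μ s ≠ ⊤) (hu : ContDiff ℝ 1 u) :
    μ s * ∫⁻ x in s, ‖u x‖ₑ ^ 4 ∂μ ≤ lFourConst (finrank ℝ E) *
      (∫⁻ x in s, ‖u x‖ₑ ^ 2 ∂μ + ediam s ^ 2 * ∫⁻ x in s, ‖fderiv ℝ u x‖ₑ ^ 2 ∂μ) ^ 2 := by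
  rcases eq_or_ne (μ s) 0 with h_zero | h_pos
  · simp [h_zero]
  have h_segment := setLIntegral_lintegral_segmentIntegral_pow_four_le (μ := μ) hn hs hc
    (hu.continuous_fderiv one_ne_zero).enorm.measurable
  have h_mean := sq_setLIntegral_le (μ := μ) (s := s) hu.continuous.enorm.measurable.aemeasurable
  have h_split := measure_pow_four_mul_setLIntegral_pow_four_le (μ := μ) hs hu
  set M := ∫⁻ x in s, ‖u x‖ₑ ^ 2 ∂μ
  set D := ∫⁻ x in s, ‖fderiv ℝ u x‖ₑ ^ 2 ∂μ
  set K : ℝ≥0∞ := ENNReal.ofReal (1 - finrank ℝ E / 4)⁻¹ ^ 4 * 2 ^ finrank ℝ E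
  rw [← ENNReal.mul_le_mul_iff_right (pow_ne_zero 3 h_pos) (ENNReal.pow_ne_top hμs)]
  calc μ s ^ 3 * (μ s * ∫⁻ x in s, ‖u x‖ₑ ^ 4 ∂μ)
      = μ s ^ 4 * ∫⁻ x in s, ‖u x‖ₑ ^ 4 ∂μ := by ring
    _ ≤ 8 * (μ s * ((∫⁻ y in s, ‖u y‖ₑ ∂μ) ^ 2) ^ 2 + ediam s ^ 4 * ∫⁻ x in s,
          (∫⁻ t in Ioo (0 : ℝ) 1, segmentIntegral μ s (‖fderiv ℝ u ·‖ₑ) x t) ^ 4 ∂μ) := by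
        rwa [← pow_mul]
    _ ≤ 8 * (μ s * (μ s * M) ^ 2 + ediam s ^ 4 *
          (ENNReal.ofReal (1 - finrank ℝ E / 4)⁻¹ ^ 4 * (2 ^ finrank ℝ E * μ s ^ 3 * D ^ 2))) := by
        gcongr
    _ = μ s ^ 3 * (8 * (M ^ 2 + K * (ediam s ^ 2 * D) ^ 2)) := by ring
    _ ≤ μ s ^ 3 * (8 * ((1 + K) * (M + ediam s ^ 2 * D) ^ 2)) := by
        gcongr
        rw [add_mul, one_mul]
        gcongr
        exacts [le_self_add, le_add_self]
    _ = μ s ^ 3 * (lFourConst (finrank ℝ E) * (M + ediam s ^ 2 * D) ^ 2) := by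
        simp only [lFourConst, K, ENNReal.ofReal]; push_cast; ring

end Segments

theorem ediam_ball_le_ofReal {X : Type*} [PseudoMetricSpace X] {x₀ : X} {R : ℝ} :
    ediam (ball x₀ R) ≤ ENNReal.ofReal (2 * R) := by
  rw [ENNReal.ofReal_mul zero_le_two, ENNReal.ofReal_ofNat, ← eball_ofReal]
  exact ediam_eball_le

theorem fderiv_comp_const_sub_apply {E F : Type*} [NormedAddCommGroup E] [NormedSpace ℝ E]
    [NormedAddCommGroup F] [NormedSpace ℝ F] {η : E → F} (hη : Differentiable ℝ η) (x y e : E) :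
    fderiv ℝ (fun z => η (x - z)) y e = -fderiv ℝ η (x - y) e := by
  have h : HasFDerivAt (fun z => η (x - z)) _ y :=
    (hη (x - y)).hasFDerivAt.comp y ((hasFDerivAt_id y).const_sub x)
  simpa using DFunLike.congr_fun h.fderiv e

theorem tendsto_measure_ball {X : Type*} [PseudoMetricSpace X] [MeasurableSpace X] (ν : Measure X)
    {x₀ : X} {R : ℝ} {ρ : ℕ → ℝ} (hρ_mono : Monotone ρ) (hρ_le : ∀ n, ρ n ≤ R)
    (hρ_lim : Tendsto ρ atTop (𝓝 R)) :
    Tendsto (fun n => ν (ball x₀ (ρ n))) atTop (𝓝 (ν (ball x₀ R))) := by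
  have h_iUnion : ⋃ n, ball x₀ (ρ n) = ball x₀ R := by
    refine (iUnion_subset fun n => ball_subset_ball (hρ_le n)).antisymm fun x hx => ?_
    exact mem_iUnion.2 (hρ_lim.eventually (lt_mem_nhds hx)).exists
  rw [← h_iUnion]
  exact tendsto_measure_iUnion_atTop fun m n hmn => ball_subset_ball (hρ_mono hmn)

theorem measureReal_ball {E : Type*} [NormedAddCommGroup E] [NormedSpace ℝ E]
    [FiniteDimensional ℝ E] [MeasurableSpace E] [BorelSpace E] (μ : Measure E) [μ.IsAddHaarMeasure]
    (x : E) {r : ℝ} (hr : 0 < r) :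
    μ.real (ball x r) = r ^ finrank ℝ E * μ.real (ball 0 1) := by
  rw [measureReal_def, Measure.addHaar_ball_of_pos μ x hr, ENNReal.toReal_mul,
    ENNReal.toReal_ofReal (by positivity), measureReal_def]

theorem lintegral_le_of_tendsto_ae {α : Type*} [MeasurableSpace α] {μ : Measure α}
    {f : ℕ → α → ℝ≥0∞} {g : α → ℝ≥0∞} {C : ℝ≥0∞} (hf : ∀ n, AEMeasurable (f n) μ)
    (h_lim : ∀ᵐ x ∂μ, Tendsto (f · x) atTop (𝓝 (g x)))
    (h_le : ∀ᶠ n in atTop, ∫⁻ x, f n x ∂μ ≤ C) : ∫⁻ x, g x ∂μ ≤ C :=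
  calc ∫⁻ x, g x ∂μ = ∫⁻ x, liminf (f · x) atTop ∂μ :=
        lintegral_congr_ae (h_lim.mono fun _ hx => hx.liminf_eq.symm)
    _ ≤ liminf (fun n => ∫⁻ x, f n x ∂μ) atTop := lintegral_liminf_le' hf
    _ ≤ C := liminf_le_of_frequently_le' h_le.frequently

section Mollification

variable {E F : Type*} [NormedAddCommGroup E] [NormedSpace ℝ E] [NormedAddCommGroup F]
  [NormedSpace ℝ F] [MeasurableSpace E] {μ : Measure E} {U V : Set E} {u w : E → F}
  {G : E → E →L[ℝ] F} {x x₀ : E} {R ρ : ℝ}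

/-- `G` is the weak (distributional) derivative of `u` on `U` with respect to `μ`. -/
def HasWeakFDeriv (μ : Measure E) (U : Set E) (u : E → F) (G : E → E →L[ℝ] F) : Prop :=
  ∀ φ : E → ℝ, ContDiff ℝ (⊤ : ℕ∞) φ → HasCompactSupport φ → tsupport φ ⊆ U → ∀ e : E,
    ∫ x in U, φ x • G x e ∂μ = -∫ x in U, fderiv ℝ φ x e • u x ∂μ

theorem HasWeakFDeriv.mono (h : HasWeakFDeriv μ U u G) (hU : MeasurableSet U) (hVU : V ⊆ U) :
    HasWeakFDeriv μ V u G := by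
  intro φ hφ hφ_cpt hφ_supp e
  have setIntegral_eq {f : E → F} (hf : ∀ x ∉ tsupport φ, f x = 0) :
      ∫ x in V, f x ∂μ = ∫ x in U, f x ∂μ :=
    (setIntegral_eq_of_subset_of_forall_sdiff_eq_zero hU hVU fun x hx =>
      hf x fun hx_supp => hx.2 (hφ_supp hx_supp)).symm
  rw [setIntegral_eq fun x hx => by rw [image_eq_zero_of_notMem_tsupport hx, zero_smul],
    setIntegral_eq fun x hx => by
      rw [image_eq_zero_of_notMem_tsupport fun h => hx (tsupport_fderiv_subset ℝ h),
        zero_apply, zero_smul]]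
  exact h φ hφ hφ_cpt (hφ_supp.trans hVU) e

variable [BorelSpace E] [FiniteDimensional ℝ E] [μ.IsAddHaarMeasure] (φ : ContDiffBump (0 : E))

/-- The convolution of `w` with the normalized smooth bump function `φ`. -/
def mollify (φ : ContDiffBump (0 : E)) (μ : Measure E) (w : E → F) : E → F :=
  φ.normed μ ⋆[ContinuousLinearMap.lsmul ℝ ℝ, μ] w

theorem contDiff_mollify (hw : Integrable w μ) : ContDiff ℝ 1 (mollify φ μ w) :=
  φ.hasCompactSupport_normed.contDiff_convolution_left _ φ.contDiff_normed hw.locallyIntegrable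

theorem enorm_mollify_le (w : E → F) (x : E) :
    ‖mollify φ μ w x‖ₑ ≤ ∫⁻ y, ENNReal.ofReal (φ.normed μ (x - y)) * ‖w y‖ₑ ∂μ := by
  rw [mollify, convolution_eq_swap]
  refine (enorm_integral_le_lintegral_enorm _).trans_eq (lintegral_congr fun y => ?_)
  rw [ContinuousLinearMap.lsmul_apply, enorm_smul, Real.enorm_of_nonneg (φ.nonneg_normed _)]

theorem lintegral_ofReal_normed : ∫⁻ x, ENNReal.ofReal (φ.normed μ x) ∂μ = 1 := by
  rw [← ofReal_integral_eq_lintegral_ofReal φ.integrable_normed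
    (Eventually.of_forall φ.nonneg_normed), φ.integral_normed, ENNReal.ofReal_one]

theorem lintegral_enorm_mollify_sq_le (hw : AEStronglyMeasurable w μ) :
    ∫⁻ x, ‖mollify φ μ w x‖ₑ ^ 2 ∂μ ≤ ∫⁻ x, ‖w x‖ₑ ^ 2 ∂μ := by
  have h_normed : Continuous (φ.normed μ) := φ.continuous_normed
  refine (lintegral_mono fun x => pow_le_pow_left' (enorm_mollify_le φ w x) 2).trans ?_
  refine lintegral_sq_lintegral_mul_le (by fun_prop) hw.enorm (fun x => ?_) fun y => ?_
  · exact ((lintegral_sub_left_eq_self (fun y => ENNReal.ofReal (φ.normed μ y)) x).trans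
      (lintegral_ofReal_normed φ)).le
  · exact ((lintegral_sub_right_eq_self (fun y => ENNReal.ofReal (φ.normed μ y)) y).trans
      (lintegral_ofReal_normed φ)).le

theorem lintegral_enorm_mollify_indicator_sq_le (hU : MeasurableSet U)
    (hw : IntegrableOn w U μ) :
    ∫⁻ x, ‖mollify φ μ (U.indicator w) x‖ₑ ^ 2 ∂μ ≤ ∫⁻ x in U, ‖w x‖ₑ ^ 2 ∂μ := by
  refine (lintegral_enorm_mollify_sq_le φ (hw.integrable_indicator hU).1).trans_eq ?_
  rw [← lintegral_indicator hU]
  refine lintegral_congr fun x => ?_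
  by_cases hx : x ∈ U <;> simp [hx]

theorem mollify_clm_apply {A : E → E →L[ℝ] F} (hA : Integrable A μ) (x e : E) :
    mollify φ μ A x e = mollify φ μ (A · e) x := by
  have h_integrable := ((φ.hasCompactSupport_normed (μ := μ)).convolutionExists_left
    (ContinuousLinearMap.lsmul ℝ ℝ) φ.continuous_normed hA.locallyIntegrable x).integrable_swap
  rw [mollify, mollify, convolution_eq_swap, convolution_eq_swap,
    ContinuousLinearMap.integral_apply h_integrable]
  rfl

theorem fderiv_mollify_apply (hw : Integrable w μ) (x e : E) :
    fderiv ℝ (mollify φ μ w) x e = ∫ y, fderiv ℝ (φ.normed μ) (x - y) e • w y ∂μ := by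
  have h_contDiff : ContDiff ℝ 1 (φ.normed μ) := φ.contDiff_normed
  have h_integrable := ((φ.hasCompactSupport_normed.fderiv (𝕜 := ℝ)).convolutionExists_left
    ((ContinuousLinearMap.lsmul ℝ ℝ).precompL E) (h_contDiff.continuous_fderiv one_ne_zero)
    hw.locallyIntegrable x).integrable_swap
  have h_fderiv := (φ.hasCompactSupport_normed.hasFDerivAt_convolution_left
    (ContinuousLinearMap.lsmul ℝ ℝ) h_contDiff hw.locallyIntegrable x).fderiv
  rw [mollify, h_fderiv, convolution_eq_swap, ContinuousLinearMap.integral_apply h_integrable]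
  rfl

theorem tsupport_normed_const_sub_subset (x : E) :
    tsupport (fun y => φ.normed μ (x - y)) ⊆ closedBall x φ.rOut := by
  refine closure_minimal (fun y hy => ?_) isClosed_closedBall
  have hy' : x - y ∈ Function.support (φ.normed μ) := hy
  rw [φ.support_normed_eq, mem_ball_zero_iff] at hy'
  rw [mem_closedBall, dist_comm, dist_eq_norm]
  exact hy'.le

theorem HasWeakFDeriv.fderiv_mollify_indicator (h : HasWeakFDeriv μ U u G) (hU : MeasurableSet U)
    (hu : IntegrableOn u U μ) (hG : IntegrableOn G U μ) (hx : closedBall x φ.rOut ⊆ U) :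
    fderiv ℝ (mollify φ μ (U.indicator u)) x = mollify φ μ (U.indicator G) x := by
  have h_contDiff : ContDiff ℝ (⊤ : ℕ∞) (φ.normed μ) := φ.contDiff_normed
  have hG_indicator : Integrable (U.indicator G) μ :=
    (integrable_indicator_iff (f := G) hU).2 hG
  have h_tsupport := tsupport_normed_const_sub_subset (μ := μ) φ x
  have h_compact : HasCompactSupport fun y => φ.normed μ (x - y) :=
    .of_support_subset_isCompact (isCompact_closedBall x φ.rOut)
      ((subset_tsupport _).trans h_tsupport)
  ext e
  have h_test := h (fun y => φ.normed μ (x - y)) (h_contDiff.comp (by fun_prop)) h_compact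
    (h_tsupport.trans hx) e
  calc fderiv ℝ (mollify φ μ (U.indicator u)) x e
      = ∫ y, fderiv ℝ (φ.normed μ) (x - y) e • U.indicator u y ∂μ :=
        fderiv_mollify_apply φ (hu.integrable_indicator hU) x e
    _ = -∫ y in U, fderiv ℝ (fun z => φ.normed μ (x - z)) y e • u y ∂μ := by
        rw [← integral_neg, ← integral_indicator hU]
        refine integral_congr_ae (Eventually.of_forall fun y => ?_)
        by_cases hy : y ∈ U <;>
          simp [hy, fderiv_comp_const_sub_apply (h_contDiff.differentiable (by simp))]
    _ = ∫ y in U, φ.normed μ (x - y) • G y e ∂μ := h_test.symm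
    _ = mollify φ μ (U.indicator G · e) x := by
        rw [mollify, convolution_eq_swap, ← integral_indicator hU]
        refine integral_congr_ae (Eventually.of_forall fun y => ?_)
        by_cases hy : y ∈ U <;> simp [hy]
    _ = mollify φ μ (U.indicator G) x e :=
        (mollify_clm_apply φ hG_indicator x e).symm

theorem HasWeakFDeriv.measure_mul_setLIntegral_mollify_pow_four_le (hn : finrank ℝ E < 4)
    (h : HasWeakFDeriv μ (ball x₀ R) u G) (hu : IntegrableOn u (ball x₀ R) μ)
    (hG : IntegrableOn G (ball x₀ R) μ) (hφ : ρ + φ.rOut ≤ R) :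
    μ (ball x₀ ρ) * ∫⁻ x in ball x₀ ρ, ‖mollify φ μ ((ball x₀ R).indicator u) x‖ₑ ^ 4 ∂μ ≤
      lFourConst (finrank ℝ E) * (∫⁻ x in ball x₀ R, ‖u x‖ₑ ^ 2 ∂μ +
        ENNReal.ofReal (2 * R) ^ 2 * ∫⁻ x in ball x₀ R, ‖G x‖ₑ ^ 2 ∂μ) ^ 2 := by
  have h_smooth := measure_mul_setLIntegral_pow_four_le hn (μ := μ) measurableSet_ball
    (convex_ball x₀ ρ) measure_ball_lt_top.ne
    (contDiff_mollify φ (hu.integrable_indicator measurableSet_ball))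
  have h_ediam : ediam (ball x₀ ρ) ≤ ENNReal.ofReal (2 * R) :=
    ediam_ball_le_ofReal.trans (ENNReal.ofReal_le_ofReal (by linarith [φ.rOut_pos]))
  have h_sq : ∫⁻ x in ball x₀ ρ, ‖mollify φ μ ((ball x₀ R).indicator u) x‖ₑ ^ 2 ∂μ ≤
      ∫⁻ x in ball x₀ R, ‖u x‖ₑ ^ 2 ∂μ :=
    (setLIntegral_le_lintegral _ _).trans
      (lintegral_enorm_mollify_indicator_sq_le φ measurableSet_ball hu)
  have h_fderiv_sq :=
    calc ∫⁻ x in ball x₀ ρ, ‖fderiv ℝ (mollify φ μ ((ball x₀ R).indicator u)) x‖ₑ ^ 2 ∂μ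
        = ∫⁻ x in ball x₀ ρ, ‖mollify φ μ ((ball x₀ R).indicator G) x‖ₑ ^ 2 ∂μ := by
          refine setLIntegral_congr_fun measurableSet_ball fun x hx => ?_
          have hx_subset : closedBall x φ.rOut ⊆ ball x₀ R :=
            closedBall_subset_ball' (by linarith [mem_ball.1 hx])
          simp only [h.fderiv_mollify_indicator φ measurableSet_ball hu hG hx_subset]
      _ ≤ ∫⁻ x, ‖mollify φ μ ((ball x₀ R).indicator G) x‖ₑ ^ 2 ∂μ :=
          setLIntegral_le_lintegral _ _
      _ ≤ ∫⁻ x in ball x₀ R, ‖G x‖ₑ ^ 2 ∂μ :=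
          lintegral_enorm_mollify_indicator_sq_le φ measurableSet_ball hG
  refine h_smooth.trans ?_
  gcongr

theorem exists_seq_contDiffBump_tendsto_zero (E : Type*) [NormedAddCommGroup E] :
    ∃ φ : ℕ → ContDiffBump (0 : E), Tendsto (fun n => (φ n).rOut) atTop (𝓝 0) ∧
      ∀ n, (φ n).rOut = 2 * (φ n).rIn := by
  obtain ⟨r, -, hr_pos, hr_lim⟩ := exists_seq_strictAnti_tendsto (0 : ℝ)
  exact ⟨fun n => ⟨r n, 2 * r n, hr_pos n, by linarith [hr_pos n]⟩,
    by simpa using hr_lim.const_mul 2, fun n => rfl⟩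

variable [CompleteSpace F]

theorem HasWeakFDeriv.measure_mul_setLIntegral_pow_four_le_of_lt (hn : finrank ℝ E < 4)
    (h : HasWeakFDeriv μ (ball x₀ R) u G) (hu : IntegrableOn u (ball x₀ R) μ)
    (hG : IntegrableOn G (ball x₀ R) μ) (hρ : ρ < R) :
    μ (ball x₀ ρ) * ∫⁻ x in ball x₀ ρ, ‖u x‖ₑ ^ 4 ∂μ ≤
      lFourConst (finrank ℝ E) * (∫⁻ x in ball x₀ R, ‖u x‖ₑ ^ 2 ∂μ +
        ENNReal.ofReal (2 * R) ^ 2 * ∫⁻ x in ball x₀ R, ‖G x‖ₑ ^ 2 ∂μ) ^ 2 := by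
  obtain ⟨φ, hφ_lim, hφ⟩ := exists_seq_contDiffBump_tendsto_zero E
  have hw : Integrable ((ball x₀ R).indicator u) μ := hu.integrable_indicator measurableSet_ball
  have h_meas (n : ℕ) : Measurable (‖mollify (φ n) μ ((ball x₀ R).indicator u) ·‖ₑ ^ 4) :=
    (contDiff_mollify (φ n) hw).continuous.enorm.measurable.pow_const 4
  have h_lim := ContDiffBump.ae_convolution_tendsto_right_of_locallyIntegrable hφ_lim
    (Eventually.of_forall fun n => (hφ n).le) hw.locallyIntegrable
  have h_ne_top : μ (ball x₀ ρ) ≠ ⊤ := measure_ball_lt_top.ne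
  rw [← lintegral_const_mul' _ _ h_ne_top]
  refine lintegral_le_of_tendsto_ae
    (f := fun n x => μ (ball x₀ ρ) * ‖mollify (φ n) μ ((ball x₀ R).indicator u) x‖ₑ ^ 4)
    (fun n => ((h_meas n).const_mul _).aemeasurable) ?_ ?_
  · filter_upwards [ae_restrict_of_ae h_lim, ae_restrict_mem measurableSet_ball] with x hx hxρ
    rw [indicator_of_mem (ball_subset_ball hρ.le hxρ)] at hx
    exact ENNReal.Tendsto.const_mul (ENNReal.Tendsto.pow hx.enorm) (Or.inr h_ne_top)
  · filter_upwards [hφ_lim.eventually (gt_mem_nhds (sub_pos.2 hρ))] with n hφn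
    rw [lintegral_const_mul _ (h_meas n)]
    exact h.measure_mul_setLIntegral_mollify_pow_four_le (φ n) hn hu hG (by linarith)

theorem HasWeakFDeriv.measure_mul_setLIntegral_pow_four_le (hn : finrank ℝ E < 4)
    (h : HasWeakFDeriv μ (ball x₀ R) u G) (hu : IntegrableOn u (ball x₀ R) μ)
    (hG : IntegrableOn G (ball x₀ R) μ) :
    μ (ball x₀ R) * ∫⁻ x in ball x₀ R, ‖u x‖ₑ ^ 4 ∂μ ≤
      lFourConst (finrank ℝ E) * (∫⁻ x in ball x₀ R, ‖u x‖ₑ ^ 2 ∂μ +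
        ENNReal.ofReal (2 * R) ^ 2 * ∫⁻ x in ball x₀ R, ‖G x‖ₑ ^ 2 ∂μ) ^ 2 := by
  rcases le_or_gt R 0 with hR | hR
  · simp [ball_eq_empty.2 hR]
  obtain ⟨ρ, hρ_mono, hρ_lt, hρ_lim⟩ := exists_seq_strictMono_tendsto R
  have tendsto_ball (ν : Measure E) := tendsto_measure_ball ν (x₀ := x₀) hρ_mono.monotone
    (fun n => (hρ_lt n).le) hρ_lim
  have h_lintegral_lim := tendsto_ball (μ.withDensity (‖u ·‖ₑ ^ 4))
  simp only [withDensity_apply _ measurableSet_ball] at h_lintegral_lim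
  exact le_of_tendsto'
    (ENNReal.Tendsto.mul (tendsto_ball μ) (Or.inl (measure_ball_pos μ x₀ hR).ne') h_lintegral_lim
      (Or.inr measure_ball_lt_top.ne))
    fun n => h.measure_mul_setLIntegral_pow_four_le_of_lt hn hu hG (hρ_lt n)

end Mollification

theorem lintegral_enorm_sq_eq_ofReal {α F : Type*} [MeasurableSpace α] {ν : Measure α}
    [NormedAddCommGroup F] {f : α → F} (hf : MemLp f 2 ν) :
    ∫⁻ x, ‖f x‖ₑ ^ 2 ∂ν = ENNReal.ofReal (∫ x, ‖f x‖ ^ 2 ∂ν) := by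
  rw [ofReal_integral_eq_lintegral_ofReal ((memLp_two_iff_integrable_sq_norm hf.1).1 hf)
    (Eventually.of_forall fun x => by positivity)]
  simp only [← ofReal_norm, ENNReal.ofReal_pow (norm_nonneg _)]

section CubicIntegral

variable {E F : Type*} [NormedAddCommGroup E] [NormedSpace ℝ E] [FiniteDimensional ℝ E]
  [MeasurableSpace E] [BorelSpace E] {μ : Measure E} [μ.IsAddHaarMeasure]
  [NormedAddCommGroup F] [NormedSpace ℝ F] [CompleteSpace F] {x₀ : E} {R : ℝ}

theorem HasWeakFDeriv.measure_mul_sq_setLIntegral_pow_three_le {u : E → F} {G : E → E →L[ℝ] F}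
    (hn : finrank ℝ E < 4) (h : HasWeakFDeriv μ (ball x₀ R) u G)
    (hu : IntegrableOn u (ball x₀ R) μ) (hG : IntegrableOn G (ball x₀ R) μ) :
    μ (ball x₀ R) * (∫⁻ x in ball x₀ R, ‖u x‖ₑ ^ 3 ∂μ) ^ 2 ≤
      lFourConst (finrank ℝ E) * (∫⁻ x in ball x₀ R, ‖u x‖ₑ ^ 2 ∂μ) *
        (∫⁻ x in ball x₀ R, ‖u x‖ₑ ^ 2 ∂μ +
          ENNReal.ofReal (2 * R) ^ 2 * ∫⁻ x in ball x₀ R, ‖G x‖ₑ ^ 2 ∂μ) ^ 2 := by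
  have h_interp : (∫⁻ x in ball x₀ R, ‖u x‖ₑ ^ 3 ∂μ) ^ 2 ≤
      (∫⁻ x in ball x₀ R, ‖u x‖ₑ ^ 2 ∂μ) * ∫⁻ x in ball x₀ R, ‖u x‖ₑ ^ 4 ∂μ := by
    have h_cauchySchwarz := sq_lintegral_mul_le (hu.1.enorm.pow_const 2) hu.1.enorm
    simpa only [← pow_succ, ← pow_add, Nat.reduceAdd] using h_cauchySchwarz
  have h_four := h.measure_mul_setLIntegral_pow_four_le hn hu hG
  set M := ∫⁻ x in ball x₀ R, ‖u x‖ₑ ^ 2 ∂μ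
  set D := ∫⁻ x in ball x₀ R, ‖G x‖ₑ ^ 2 ∂μ
  calc μ (ball x₀ R) * (∫⁻ x in ball x₀ R, ‖u x‖ₑ ^ 3 ∂μ) ^ 2
      ≤ μ (ball x₀ R) * (M * ∫⁻ x in ball x₀ R, ‖u x‖ₑ ^ 4 ∂μ) := by gcongr
    _ = M * (μ (ball x₀ R) * ∫⁻ x in ball x₀ R, ‖u x‖ₑ ^ 4 ∂μ) := by ring
    _ ≤ M * (lFourConst (finrank ℝ E) * (M + ENNReal.ofReal (2 * R) ^ 2 * D) ^ 2) := by gcongr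
    _ = lFourConst (finrank ℝ E) * M * (M + ENNReal.ofReal (2 * R) ^ 2 * D) ^ 2 := by ring

theorem HasWeakFDeriv.setIntegral_norm_pow_three_le {u : E → F} {G : E → E →L[ℝ] F}
    (hn : finrank ℝ E < 4) (h : HasWeakFDeriv μ (ball x₀ R) u G)
    (hu : MemLp u 2 (μ.restrict (ball x₀ R))) (hG : MemLp G 2 (μ.restrict (ball x₀ R))) :
    ∫ x in ball x₀ R, ‖u x‖ ^ 3 ∂μ ≤
      √(lFourConst (finrank ℝ E) * (∫ x in ball x₀ R, ‖u x‖ ^ 2 ∂μ) / μ.real (ball x₀ R)) *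
        (∫ x in ball x₀ R, ‖u x‖ ^ 2 ∂μ + (2 * R) ^ 2 * ∫ x in ball x₀ R, ‖G x‖ ^ 2 ∂μ) := by
  rcases le_or_gt R 0 with hR | hR
  · simp [ball_eq_empty.2 hR]
  have : IsFiniteMeasure (μ.restrict (ball x₀ R)) :=
    isFiniteMeasure_restrict.2 measure_ball_lt_top.ne
  have h_lintegral := h.measure_mul_sq_setLIntegral_pow_three_le hn (hu.integrable one_le_two)
    (hG.integrable one_le_two)
  rw [lintegral_enorm_sq_eq_ofReal hu, lintegral_enorm_sq_eq_ofReal hG,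
    ← ofReal_measureReal] at h_lintegral
  have h_ball_pos : 0 < μ.real (ball x₀ R) :=
    ENNReal.toReal_pos (measure_ball_pos μ x₀ hR).ne' measure_ball_lt_top.ne
  set J := ∫ x in ball x₀ R, ‖u x‖ ^ 3 ∂μ
  set M := ∫ x in ball x₀ R, ‖u x‖ ^ 2 ∂μ
  set D := ∫ x in ball x₀ R, ‖G x‖ ^ 2 ∂μ
  have hM : 0 ≤ M := by positivity
  have hD : 0 ≤ D := by positivity
  have hJ : 0 ≤ J := by positivity
  have hJ_le : ENNReal.ofReal J ≤ ∫⁻ x in ball x₀ R, ‖u x‖ₑ ^ 3 ∂μ := by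
    rw [← Real.enorm_of_nonneg hJ]
    refine (enorm_integral_le_lintegral_enorm _).trans_eq (lintegral_congr fun x => ?_)
    rw [enorm_pow, enorm_norm]
  have h_sq : μ.real (ball x₀ R) * J ^ 2 ≤
      lFourConst (finrank ℝ E) * M * (M + (2 * R) ^ 2 * D) ^ 2 := by
    rw [← ENNReal.ofReal_le_ofReal_iff (by positivity), ENNReal.ofReal_mul (by positivity),
      ENNReal.ofReal_mul (by positivity), ENNReal.ofReal_mul (by positivity),
      ENNReal.ofReal_pow hJ, ENNReal.ofReal_pow (by positivity),
      ENNReal.ofReal_add hM (mul_nonneg (sq_nonneg _) hD), ENNReal.ofReal_mul (by positivity),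
      ENNReal.ofReal_pow (by positivity), ENNReal.ofReal_coe_nnreal]
    exact (mul_le_mul_right (pow_le_pow_left' hJ_le 2) _).trans h_lintegral
  refine (pow_le_pow_iff_left₀ hJ (by positivity) two_ne_zero).1 ?_
  rw [mul_pow, Real.sq_sqrt (by positivity), div_mul_eq_mul_div, le_div_iff₀' h_ball_pos]
  exact h_sq

variable {T : Type*} [MeasurableSpace T] {τ : Measure T} [IsFiniteMeasure τ]

theorem integral_setIntegral_norm_pow_three_le {u : E → T → F} {G : E → T → E →L[ℝ] F} {S : ℝ}
    (hn : finrank ℝ E < 4)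
    (h : ∀ᵐ t ∂τ, HasWeakFDeriv μ (ball x₀ R) (u · t) (G · t))
    (hu : AEStronglyMeasurable (Function.uncurry u) ((μ.restrict (ball x₀ R)).prod τ))
    (hG : MemLp (Function.uncurry G) 2 ((μ.restrict (ball x₀ R)).prod τ))
    (hu_sq : ∀ᵐ t ∂τ, IntegrableOn (fun x => ‖u x t‖ ^ 2) (ball x₀ R) μ)
    (hS : ∀ᵐ t ∂τ, ∫ x in ball x₀ R, ‖u x t‖ ^ 2 ∂μ ≤ S) :
    ∫ t, ∫ x in ball x₀ R, ‖u x t‖ ^ 3 ∂μ ∂τ ≤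
      √(lFourConst (finrank ℝ E) * S / μ.real (ball x₀ R)) *
        (τ.real univ * S +
          (2 * R) ^ 2 * ∫ t, ∫ x in ball x₀ R, ‖G x t‖ ^ 2 ∂μ ∂τ) := by
  have hG_sq := (memLp_two_iff_integrable_sq_norm hG.1).1 hG
  have hD : Integrable (fun t => ∫ x in ball x₀ R, ‖G x t‖ ^ 2 ∂μ) τ := hG_sq.integral_prod_right
  have h_slice : ∀ᵐ t ∂τ, ∫ x in ball x₀ R, ‖u x t‖ ^ 3 ∂μ ≤
      √(lFourConst (finrank ℝ E) * S / μ.real (ball x₀ R)) *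
        (S + (2 * R) ^ 2 * ∫ x in ball x₀ R, ‖G x t‖ ^ 2 ∂μ) := by
    filter_upwards [h, hu.prod_swap.prodMk_left, hG.1.prod_swap.prodMk_left,
      hG_sq.prod_left_ae, hu_sq, hS] with t ht hu_meas hG_meas hG_int hu_int hSt
    have hu_memLp := (memLp_two_iff_integrable_sq_norm hu_meas).2 hu_int
    have hG_memLp := (memLp_two_iff_integrable_sq_norm hG_meas).2 hG_int
    refine (ht.setIntegral_norm_pow_three_le hn hu_memLp hG_memLp).trans ?_
    gcongr
  calc ∫ t, ∫ x in ball x₀ R, ‖u x t‖ ^ 3 ∂μ ∂τ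
      ≤ ∫ t, √(lFourConst (finrank ℝ E) * S / μ.real (ball x₀ R)) *
          (S + (2 * R) ^ 2 * ∫ x in ball x₀ R, ‖G x t‖ ^ 2 ∂μ) ∂τ :=
        integral_mono_of_nonneg (Eventually.of_forall fun t => by positivity)
          (((integrable_const S).add (hD.const_mul _)).const_mul _) h_slice
    _ = _ := by
        rw [integral_const_mul, integral_add (integrable_const S) (hD.const_mul _),
          integral_const_mul, integral_const, smul_eq_mul]

end CubicIntegral

theorem norm_sq_le_fnormSq (A : V3 →L[ℝ] V3) : ‖A‖ ^ 2 ≤ fnormSq A := by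
  have h_nonneg : 0 ≤ fnormSq A := by unfold fnormSq; positivity
  have norm_apply_le (x : V3) : ‖A x‖ ≤ √(fnormSq A) * ‖x‖ :=
    calc ‖A x‖ = ‖∑ i, x i • A (e3 i)‖ := by
          conv_lhs => rw [← (EuclideanSpace.basisFun (Fin 3) ℝ).sum_repr x, map_sum]
          simp [e3]
      _ ≤ ∑ i, ‖A (e3 i)‖ * ‖x i‖ :=
          (norm_sum_le _ _).trans_eq (Finset.sum_congr rfl fun i _ => by rw [norm_smul, mul_comm])
      _ ≤ √(∑ i, ‖A (e3 i)‖ ^ 2) * √(∑ i, ‖x i‖ ^ 2) := Real.sum_mul_le_sqrt_mul_sqrt _ _ _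
      _ = √(fnormSq A) * ‖x‖ := by rw [fnormSq, EuclideanSpace.norm_eq x]
  rw [← Real.sq_sqrt h_nonneg]
  exact pow_le_pow_left₀ (norm_nonneg A) (A.opNorm_le_bound (Real.sqrt_nonneg _) norm_apply_le) 2

theorem sqrt_mul_div_pow_three_mul {b κ a r : ℝ} (hb : 0 ≤ b) (hκ : 0 ≤ κ) (hr : 0 < r) :
    √(b * (r * a) / (r ^ 3 * κ)) = √(b / κ) * √a * r⁻¹ := by
  rw [← Real.sqrt_mul (by positivity), ← Real.sqrt_sq (inv_nonneg.2 hr.le),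
    ← Real.sqrt_mul' _ (by positivity)]
  congr 1
  field_simp

section ParabolicCylinder

variable {v : V3 → ℝ → V3} {dv : V3 → ℝ → V3 →L[ℝ] V3} {r : ℝ}

theorem memLp_two_uncurry_of_integrable_fnormSq {ν : Measure (V3 × ℝ)}
    (hdv : AEMeasurable (fun z : V3 × ℝ => dv z.1 z.2) ν)
    (hdv_sq : Integrable (fun z : V3 × ℝ => fnormSq (dv z.1 z.2)) ν) :
    MemLp (Function.uncurry dv) 2 ν := by
  have h_meas : AEStronglyMeasurable (Function.uncurry dv) ν := hdv.aestronglyMeasurable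
  refine (memLp_two_iff_integrable_sq_norm h_meas).2 ?_
  refine hdv_sq.mono' (h_meas.norm.pow 2) (Eventually.of_forall fun z => ?_)
  rw [Real.norm_of_nonneg (by positivity)]
  exact norm_sq_le_fnormSq _

theorem IsWeakSpatialGradient.ae_hasWeakFDeriv {U V : Set V3} {I J : Set ℝ}
    (h : IsWeakSpatialGradient U I v dv) (hU : MeasurableSet U) (hVU : V ⊆ U) (hJI : J ⊆ I) :
    ∀ᵐ t ∂volume.restrict J, HasWeakFDeriv volume V (v · t) (dv · t) :=
  (ae_restrict_of_ae_restrict_of_subset hJI h).mono fun _ ht =>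
    HasWeakFDeriv.mono (fun φ hφ hφ_cpt hφ_supp e => ht φ ⟨hφ, hφ_cpt, hφ_supp⟩ e) hU hVU

theorem setIntegral_norm_sq_le_mul_funA {K s : ℝ} (hr : 0 < r)
    (hK : ∀ t ∈ Ioo (-r ^ 2) 0, ∫ x in ball (0 : V3) r, ‖v x t‖ ^ 2 ≤ K)
    (hs : s ∈ Ioo (-r ^ 2) 0) : ∫ x in ball (0 : V3) r, ‖v x s‖ ^ 2 ≤ r * funA v r := by
  rw [funA, mul_inv_cancel_left₀ hr.ne']
  exact le_csSup ⟨K, forall_mem_image.2 hK⟩ (mem_image_of_mem _ hs)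

theorem funA_nonneg (hr : 0 ≤ r) : 0 ≤ funA v r :=
  mul_nonneg (inv_nonneg.2 hr) <| Real.sSup_nonneg <| forall_mem_image.2 fun s _ => by positivity

/-- Lebesgue measure on the parabolic cylinder `Q(r)`, as a product measure so that Fubini's theorem
applies to it. -/
abbrev cylinderMeasure (r : ℝ) : Measure (V3 × ℝ) :=
  (volume.restrict (ball (0 : V3) r)).prod (volume.restrict (Ioo (-r ^ 2) 0))

theorem Ioo_neg_sq_subset (hr : 0 ≤ r) (hr_one : r ≤ 1) : Ioo (-r ^ 2) 0 ⊆ Ioo (-1 : ℝ) 0 :=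
  Ioo_subset_Ioo_left (neg_le_neg (pow_le_one₀ hr hr_one))

theorem cylinderMeasure_le_restrict (hr : 0 ≤ r) (hr_one : r ≤ 1) :
    cylinderMeasure r ≤ volume.restrict (ball (0 : V3) 1 ×ˢ Ioo (-1 : ℝ) 0) := by
  rw [cylinderMeasure, Measure.prod_restrict]
  exact Measure.restrict_mono_set _
    (Set.prod_mono (ball_subset_ball hr_one) (Ioo_neg_sq_subset hr hr_one))

theorem integral_setIntegral_norm_sq_le_mul_funE (hr : 0 < r)
    (hdv : MemLp (Function.uncurry dv) 2 (cylinderMeasure r))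
    (hdv_sq : Integrable (fun z : V3 × ℝ => fnormSq (dv z.1 z.2)) (cylinderMeasure r)) :
    ∫ t in Ioo (-r ^ 2) 0, ∫ x in ball (0 : V3) r, ‖dv x t‖ ^ 2 ≤ r * funE dv r := by
  rw [funE, mul_inv_cancel_left₀ hr.ne']
  have h_int := (memLp_two_iff_integrable_sq_norm hdv.1).1 hdv
  refine integral_mono_ae h_int.integral_prod_right hdv_sq.integral_prod_right ?_
  filter_upwards [h_int.prod_left_ae, hdv_sq.prod_left_ae] with t ht ht_sq
  exact integral_mono ht ht_sq fun x => norm_sq_le_fnormSq _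

theorem funE_nonneg (hr : 0 ≤ r) : 0 ≤ funE dv r := by
  unfold funE fnormSq; positivity

/-- The constant in the bound of `C(r)` by `A(r)` and `E(r)`; its factor `4` is the square of the
ratio of the diameter of `B(r)` to `r`. -/
def funCConst : ℝ := 4 * √(lFourConst 3 / volume.real (ball (0 : V3) 1))

theorem funCConst_pos : 0 < funCConst := by
  have h_ball : 0 < volume.real (ball (0 : V3) 1) :=
    ENNReal.toReal_pos (measure_ball_pos _ _ one_pos).ne' measure_ball_lt_top.ne
  have h_const : 0 < lFourConst 3 := by unfold lFourConst; positivity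
  unfold funCConst
  positivity

theorem funC_le_funA_add_funE {K : ℝ} (hr : 0 < r)
    (hv : AEStronglyMeasurable (Function.uncurry v) (cylinderMeasure r))
    (hv_sq : ∀ t ∈ Ioo (-r ^ 2) 0, IntegrableOn (fun x => ‖v x t‖ ^ 2) (ball (0 : V3) r))
    (hK : ∀ t ∈ Ioo (-r ^ 2) 0, ∫ x in ball (0 : V3) r, ‖v x t‖ ^ 2 ≤ K)
    (h : ∀ᵐ t ∂volume.restrict (Ioo (-r ^ 2) 0),
      HasWeakFDeriv volume (ball (0 : V3) r) (v · t) (dv · t))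
    (hdv : AEMeasurable (fun z : V3 × ℝ => dv z.1 z.2) (cylinderMeasure r))
    (hdv_sq : Integrable (fun z : V3 × ℝ => fnormSq (dv z.1 z.2)) (cylinderMeasure r)) :
    funC v r ≤ funCConst * √(funA v r) * (funA v r + funE dv r) := by
  have hA : 0 ≤ funA v r := funA_nonneg hr.le
  have hdv_memLp := memLp_two_uncurry_of_integrable_fnormSq hdv hdv_sq
  have h_finrank : finrank ℝ V3 = 3 := finrank_euclideanSpace_fin
  have h_interval : (volume.restrict (Ioo (-r ^ 2) 0)).real univ = r ^ 2 := by
    simp [measureReal_restrict_apply, sq_nonneg]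
  have h_cubic := integral_setIntegral_norm_pow_three_le (by rw [h_finrank]; norm_num) h hv
    hdv_memLp ((ae_restrict_mem measurableSet_Ioo).mono hv_sq)
    ((ae_restrict_mem measurableSet_Ioo).mono fun s => setIntegral_norm_sq_le_mul_funA hr hK)
  rw [measureReal_ball _ _ hr, h_finrank, h_interval, sqrt_mul_div_pow_three_mul (by positivity)
    (by positivity) hr] at h_cubic
  set κ := volume.real (ball (0 : V3) 1)
  calc funC v r ≤ r ^ (-2 : ℝ) * (√(lFourConst 3 / κ) * √(funA v r) * r⁻¹ *
        (r ^ 2 * (r * funA v r) + (2 * r) ^ 2 * (r * funE dv r))) := by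
        unfold funC
        gcongr
        refine h_cubic.trans ?_
        gcongr
        exact integral_setIntegral_norm_sq_le_mul_funE hr hdv_memLp hdv_sq
    _ = √(lFourConst 3 / κ) * √(funA v r) * (funA v r + 4 * funE dv r) := by
        rw [Real.rpow_neg hr.le, Real.rpow_ofNat]
        field_simp
        ring
    _ ≤ √(lFourConst 3 / κ) * √(funA v r) * (4 * (funA v r + funE dv r)) := by
        gcongr
        linarith
    _ = funCConst * √(funA v r) * (funA v r + funE dv r) := by rw [funCConst]; ring

end ParabolicCylinder

theorem rpow_two_thirds_le_of_le_mul_sqrt_mul {a c x y : ℝ} (ha : 0 ≤ a) (hc : 0 ≤ c) (hy : 0 ≤ y)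
    (hxy : x ≤ y) (h : a ≤ c * √x * y) : a ^ (2 / 3 : ℝ) ≤ c ^ (2 / 3 : ℝ) * y := by
  have sqrt_mul_self_eq : √y * y = y ^ (3 / 2 : ℝ) := by
    rw [Real.sqrt_eq_rpow, ← Real.rpow_add_one' hy (by norm_num)]
    norm_num
  calc a ^ (2 / 3 : ℝ) ≤ (c * √y * y) ^ (2 / 3 : ℝ) := by
        gcongr
        exact h.trans (by gcongr)
    _ = c ^ (2 / 3 : ℝ) * y := by
        rw [mul_assoc, sqrt_mul_self_eq, Real.mul_rpow hc (by positivity), ← Real.rpow_mul hy]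
        norm_num

theorem statement17 :
    ∃ c : ℝ, 0 < c ∧
      ∀ (v : V3 → ℝ → V3) (dv : V3 → ℝ → V3 →L[ℝ] V3),
        AEMeasurable (fun z : V3 × ℝ => v z.1 z.2)
          (volume.restrict (ball (0 : V3) 1 ×ˢ Ioo (-1 : ℝ) 0)) →
        AEMeasurable (fun z : V3 × ℝ => dv z.1 z.2)
          (volume.restrict (ball (0 : V3) 1 ×ˢ Ioo (-1 : ℝ) 0)) →
        (∃ K : ℝ, ∀ s ∈ Ioo (-1 : ℝ) 0,
          IntegrableOn (fun x => ‖v x s‖ ^ 2) (ball (0 : V3) 1) volume ∧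
          (∫ x in ball (0 : V3) 1, ‖v x s‖ ^ 2) ≤ K) →
        IsWeakSpatialGradient (ball (0 : V3) 1) (Ioo (-1 : ℝ) 0) v dv →
        IntegrableOn (fun z : V3 × ℝ => fnormSq (dv z.1 z.2))
          (ball (0 : V3) 1 ×ˢ Ioo (-1 : ℝ) 0) volume →
        ∀ r : ℝ, 0 < r → r ≤ 1 →
          (r ^ (-2 : ℝ) * ∫ t in Ioo (-r ^ 2) 0, ∫ x in ball (0 : V3) r, ‖v x t‖ ^ 3)
              ^ ((2:ℝ)/3)
            ≤ c * (funA v r + funE dv r) := by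
  refine ⟨funCConst ^ (2 / 3 : ℝ), Real.rpow_pos_of_pos funCConst_pos _, ?_⟩
  rintro v dv hv hdv ⟨K, hK⟩ h_weak hdv_sq r hr hr_one
  have h_ball : ball (0 : V3) r ⊆ ball 0 1 := ball_subset_ball hr_one
  have h_Ioo := Ioo_neg_sq_subset hr.le hr_one
  have h_measure := cylinderMeasure_le_restrict hr.le hr_one
  have h_sq_le (t : ℝ) (ht : t ∈ Ioo (-r ^ 2) 0) : ∫ x in ball (0 : V3) r, ‖v x t‖ ^ 2 ≤ K :=
    (setIntegral_mono_set (hK t (h_Ioo ht)).1 (Eventually.of_forall fun x => by positivity)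
      h_ball.eventuallyLE).trans (hK t (h_Ioo ht)).2
  have h_funC : funC v r ≤ funCConst * √(funA v r) * (funA v r + funE dv r) :=
    funC_le_funA_add_funE hr (hv.mono_measure h_measure).aestronglyMeasurable
      (fun t ht => (hK t (h_Ioo ht)).1.mono_set h_ball) h_sq_le
      (h_weak.ae_hasWeakFDeriv measurableSet_ball h_ball h_Ioo)
      (hdv.mono_measure h_measure) (Integrable.mono_measure hdv_sq h_measure)
  have hA : 0 ≤ funA v r := funA_nonneg hr.le
  have hE : 0 ≤ funE dv r := funE_nonneg hr.le
  exact rpow_two_thirds_le_of_le_mul_sqrt_mul (by positivity) funCConst_pos.le (by positivity)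
    (le_add_of_nonneg_right hE) h_funC

end
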